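/- For every natural number n with n ∉ {1,2} and every z ∈ ℂ with 1 + 2z² ≠ 0, the function Ĥₙ satisfies the exceptional Hermite differential equation: Ĥₙ''(z) − 2·(z + 4z/(1+2z²))·Ĥₙ'(z) + 2n·Ĥₙ(z) = 0. -/

import Mathlib

/-- Physicists' Hermite polynomials via the Rodrigues formula (complex version). -/
noncomputable def Hc (n : ℕ) (z : ℂ) : ℂ :=
  (-1) ^ n * Complex.exp (z ^ 2) * iteratedDeriv n (fun t => Complex.exp (-t ^ 2)) z

/-- The function Ĥₙ. -/
noncomputable def Hhatc (n : ℕ) (z : ℂ) : ℂ :=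
  Hc n z + 4 * (n : ℂ) * Hc (n - 2) z + 4 * (n : ℂ) * ((n : ℂ) - 3) * Hc (n - 4) z

theorem gd (n : ℕ) (z : ℂ) : HasDerivAt (iteratedDeriv n (fun t : ℂ => Complex.exp (-t ^ 2)))
    (iteratedDeriv (n+1) (fun t : ℂ => Complex.exp (-t ^ 2)) z) z := by
  rw [iteratedDeriv_succ]
  have h : ContDiff ℂ ((n+1 : ℕ) : WithTop ℕ∞) (fun t : ℂ => Complex.exp (-t ^ 2)) := by fun_prop
  have h2 := h.differentiable_iteratedDeriv n (by exact_mod_cast Nat.lt_succ_self n)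
  exact (h2 z).hasDerivAt

theorem g1 (z : ℂ) : iteratedDeriv 1 (fun t : ℂ => Complex.exp (-t ^ 2)) z
    = -2 * z * iteratedDeriv 0 (fun t : ℂ => Complex.exp (-t ^ 2)) z := by
  rw [iteratedDeriv_one, iteratedDeriv_zero]
  have h : HasDerivAt (fun t : ℂ => Complex.exp (-t ^ 2)) _ z :=
    (((hasDerivAt_id z).pow 2).neg).cexp
  rw [h.deriv]
  simp
  ring

theorem g2 (n : ℕ) : ∀ z : ℂ, iteratedDeriv (n+2) (fun t : ℂ => Complex.exp (-t ^ 2)) z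
    = -2 * z * iteratedDeriv (n+1) (fun t : ℂ => Complex.exp (-t ^ 2)) z
      - 2 * (n+1) * iteratedDeriv n (fun t : ℂ => Complex.exp (-t ^ 2)) z := by
  induction n with
  | zero =>
    intro z
    have h := gd 1 z
    have e : iteratedDeriv 1 (fun t : ℂ => Complex.exp (-t ^ 2)) =
      fun z => -2 * z * iteratedDeriv 0 (fun t : ℂ => Complex.exp (-t ^ 2)) z := funext g1
    rw [e] at h
    have h' := (((hasDerivAt_id z).const_mul (-2)).mul (gd 0 z))
    have := h.unique h'
    simp only [id, zero_add] at this ⊢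
    rw [show (2:ℕ) = 1+1 from rfl, this]
    push_cast
    ring
  | succ n ih =>
    intro z
    have h := gd (n+2) z
    rw [funext ih] at h
    have h' := (((hasDerivAt_id z).const_mul (-2)).mul (gd (n+1) z)).sub
      ((gd n z).const_mul (2 * ((n:ℂ)+1)))
    have := h.unique h'
    simp only [id] at this ⊢
    rw [show n+1+2 = n+2+1 from rfl, this]
    push_cast
    ring

theorem Hc_d (n : ℕ) (z : ℂ) : HasDerivAt (Hc n) (2 * z * Hc n z - Hc (n+1) z) z := by
  have h := ((((hasDerivAt_id z).pow 2).cexp).const_mul ((-1:ℂ)^n)).mul (gd n z)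
  refine (h.congr_deriv ?_)
  simp [Hc, pow_succ]
  ring

theorem Hc_rec (n : ℕ) (z : ℂ) : Hc (n+2) z = 2 * z * Hc (n+1) z - 2 * (n+1) * Hc n z := by
  unfold Hc
  rw [g2 n z]
  ring

theorem Hc_zero (z : ℂ) : Hc 0 z = 1 := by
  simp [Hc, ← Complex.exp_add]

theorem Hc_one (z : ℂ) : Hc 1 z = 2 * z := by
  have := (Hc_d 0 z)
  rw [show Hc 0 = fun _ => (1:ℂ) from funext Hc_zero] at this
  have h := this.unique (hasDerivAt_const z (1:ℂ))
  simp at h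
  linear_combination -h

theorem Hc_d' (n : ℕ) (z : ℂ) : HasDerivAt (Hc (n+1)) (2 * (n+1) * Hc n z) z := by
  refine (Hc_d (n+1) z).congr_deriv ?_
  rw [Hc_rec n z]; ring

theorem stmt1 (n : ℕ) (hn : n ∉ ({1, 2} : Set ℕ)) (z : ℂ) (hz : 1 + 2 * z ^ 2 ≠ 0) :
    deriv (deriv (Hhatc n)) z
      - 2 * (z + 4 * z / (1 + 2 * z ^ 2)) * deriv (Hhatc n) z
      + 2 * (n : ℂ) * Hhatc n z = 0 := by
  match n, hn with
  | 0, _ =>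
    have e : Hhatc 0 = fun _ => (1:ℂ) := by
      funext z; simp [Hhatc, Hc_zero]
    simp [e]
  | 1, h => simp at h
  | 2, h => simp at h
  | 3, _ =>
    have e : Hhatc 3 = fun z => Hc 3 z + 12 * Hc 1 z := by
      funext z; simp [Hhatc]; norm_num
    have d : deriv (Hhatc 3) = fun z => 6 * Hc 2 z + 24 * Hc 0 z := by
      funext z
      rw [e]
      refine (((Hc_d' 2 z).add ((Hc_d' 0 z).const_mul 12)).congr_deriv ?_).deriv
      push_cast; ring
    have d2 : deriv (deriv (Hhatc 3)) z = 24 * Hc 1 z := by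
      rw [d, show Hc 0 = fun _ => (1:ℂ) from funext Hc_zero]
      refine ((((Hc_d' 1 z).const_mul 6).add_const (24 * 1)).congr_deriv ?_).deriv
      push_cast; ring
    rw [d2, d, e]
    simp only [Hc_rec 1 z, Hc_rec 0 z, Hc_zero, Hc_one, zero_add]
    field_simp
    push_cast
    ring
  | k+4, _ =>
    have e : Hhatc (k+4) = fun z => Hc (k+4) z + 4 * ((k:ℂ)+4) * Hc (k+2) z
        + 4 * ((k:ℂ)+4) * (k+1) * Hc k z := by
      funext z
      simp only [Hhatc, show k+4-2 = k+2 from rfl, show k+4-4 = k from rfl]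
      push_cast; ring
    have d : deriv (Hhatc (k+4)) = fun z => 2*((k:ℂ)+4) * Hc (k+3) z
        + 8 * ((k:ℂ)+4) * (k+2) * Hc (k+1) z
        + 4 * ((k:ℂ)+4) * (k+1) * (2 * z * Hc k z - Hc (k+1) z) := by
      funext z
      rw [e]
      refine ((((Hc_d' (k+3) z).add ((Hc_d' (k+1) z).const_mul (4 * ((k:ℂ)+4)))).add
        ((Hc_d k z).const_mul (4 * ((k:ℂ)+4) * (k+1)))).congr_deriv ?_).deriv
      push_cast; ring
    have d2 : deriv (deriv (Hhatc (k+4))) z = 2*((k:ℂ)+4) * (2 * (k+3) * Hc (k+2) z)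
        + 8 * ((k:ℂ)+4) * (k+2) * (2 * (k+1) * Hc k z)
        + 4 * ((k:ℂ)+4) * (k+1) * (2 * Hc k z + 2 * z * (2 * z * Hc k z - Hc (k+1) z)
          - 2 * (k+1) * Hc k z) := by
      rw [d]
      refine (((((Hc_d' (k+2) z).const_mul (2*((k:ℂ)+4))).add
        ((Hc_d' k z).const_mul (8 * ((k:ℂ)+4) * (k+2)))).add
        (((((hasDerivAt_id z).const_mul 2).mul (Hc_d k z)).sub (Hc_d' k z)).const_mul
          (4 * ((k:ℂ)+4) * (k+1)))).congr_deriv ?_).deriv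
      simp only [id]
      push_cast; ring
    rw [d2, d, e]
    have r4 := Hc_rec (k+2) z
    have r3 := Hc_rec (k+1) z
    have r2 := Hc_rec k z
    simp only [add_assoc] at r4 r3
    norm_num at r4 r3
    simp only [r4, r3, r2]
    field_simp
    push_cast
    ring
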